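/- arXiv:1705.00957 — 2 statements merged into one kernel-verified Lean document; each statement's English description precedes it below -/
import Mathlib

section
/- For every integer N ≥ 2, set h = 2(N−1). Then for every real q with 0 < q < 1, the D_N lattice theta function at the rescaled Weyl vector ρ/h, with ρ = (N−1, N−2, …, 1, 0), has the product form: ∑ over k ∈ ℤ^N with k_1 + … + k_N even of q^((1/2)·∑_{i=1}^N (k_i + (N−i)/h)²) equals η(q)^(N+1) · η(q^(1/(N−1))) / ( η(q^(1/2)) · η(q^(1/(2(N−1)))) ), where η(x) = x^(1/24)·∏_{n=1}^∞ (1−x^n). -/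
open scoped BigOperators

/-- The Dedekind eta function (without the modular variable normalization):
    `η(x) = x^(1/24) · ∏_{n=1}^∞ (1 − x^n)`. -/
noncomputable def dedekindEta (x : ℝ) : ℝ := x ^ ((1 : ℝ) / 24) * ∏' n : ℕ, (1 - x ^ (n + 1))

section aux
open Filter Topology

/-- Euler product. -/
noncomputable def phiE (x : ℝ) : ℝ := ∏' n : ℕ, (1 - x ^ (n + 1))

/-- Finite Pochhammer. -/
noncomputable def poch (q : ℝ) (n : ℕ) : ℝ := ∏ i ∈ Finset.range n, (1 - q ^ (i + 1))

/-- Reciprocal, zero at negative integers. -/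
noncomputable def rpo (q : ℝ) (n : ℤ) : ℝ := if n < 0 then 0 else (poch q n.toNat)⁻¹

lemma summable_pow_succ {x : ℝ} (h0 : 0 < x) (h1 : x < 1) : Summable (fun n : ℕ => x ^ (n + 1)) :=
  (summable_nat_add_iff 1).2 (summable_geometric_of_lt_one h0.le h1)

lemma mult_phi {x : ℝ} (h0 : 0 < x) (h1 : x < 1) : Multipliable (fun n : ℕ => 1 - x ^ (n + 1)) := by
  simpa [sub_eq_add_neg] using
    Real.multipliable_one_add_of_summable (summable_pow_succ h0 h1).neg

lemma mult_plus {f : ℕ → ℝ} (hf : Summable f) : Multipliable (fun n : ℕ => 1 + f n) :=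
  Real.multipliable_one_add_of_summable hf

lemma one_sub_pos' {x : ℝ} (h0 : 0 < x) (h1 : x < 1) (n : ℕ) : 0 < 1 - x ^ (n + 1) :=
  sub_pos.2 (pow_lt_one₀ h0.le h1 (by omega))

lemma phi_ne {x : ℝ} (h0 : 0 < x) (h1 : x < 1) : phiE x ≠ 0 := by
  unfold phiE
  have := tprod_one_add_ne_zero_of_summable (f := fun n : ℕ => -x ^ (n + 1)) (R := ℝ)
    (fun n => by have := one_sub_pos' h0 h1 n; intro h; linarith)
    (by simpa using (summable_pow_succ h0 h1).norm)
  simpa [sub_eq_add_neg] using this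

lemma poch_pos {x : ℝ} (h0 : 0 < x) (h1 : x < 1) (n : ℕ) : 0 < poch x n :=
  Finset.prod_pos fun i _ => one_sub_pos' h0 h1 i

lemma poch_tendsto {x : ℝ} (h0 : 0 < x) (h1 : x < 1) :
    Tendsto (poch x) atTop (𝓝 (phiE x)) := (mult_phi h0 h1).tendsto_prod_tprod_nat

lemma poch_anti {x : ℝ} (h0 : 0 < x) (h1 : x < 1) : Antitone (poch x) := by
  refine antitone_nat_of_succ_le fun n => ?_
  rw [poch, Finset.prod_range_succ]
  have := poch_pos h0 h1 n
  have h2 : 0 < x ^ (n + 1) := by positivity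
  exact mul_le_of_le_one_right this.le (by linarith)

lemma phi_le {x : ℝ} (h0 : 0 < x) (h1 : x < 1) (n : ℕ) : phiE x ≤ poch x n :=
  (poch_anti h0 h1).le_of_tendsto (poch_tendsto h0 h1) n

lemma phi_pos {x : ℝ} (h0 : 0 < x) (h1 : x < 1) : 0 < phiE x :=
  lt_of_le_of_ne (ge_of_tendsto' (poch_tendsto h0 h1) fun n => (poch_pos h0 h1 n).le)
    (phi_ne h0 h1).symm

lemma poch_le_one {x : ℝ} (h0 : 0 < x) (h1 : x < 1) (n : ℕ) : poch x n ≤ 1 := by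
  simpa [poch] using poch_anti h0 h1 (Nat.zero_le n)

lemma rpo_nonneg {x : ℝ} (h0 : 0 < x) (h1 : x < 1) (n : ℤ) : 0 ≤ rpo x n := by
  unfold rpo; split_ifs
  · rfl
  · exact (inv_pos.2 (poch_pos h0 h1 _)).le

lemma rpo_le {x : ℝ} (h0 : 0 < x) (h1 : x < 1) (n : ℤ) : rpo x n ≤ (phiE x)⁻¹ := by
  unfold rpo; split_ifs
  · exact (inv_pos.2 (phi_pos h0 h1)).le
  · exact inv_anti₀ (phi_pos h0 h1) (phi_le h0 h1 _)

lemma rpo_rec {x : ℝ} (h0 : 0 < x) (h1 : x < 1) (n : ℤ) :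
    rpo x n = rpo x (n + 1) * (1 - x ^ (n + 1)) := by
  rcases lt_trichotomy n (-1) with h | h | h
  · simp [rpo, show n < 0 by omega, show n + 1 < 0 by omega]
  · subst h; simp [rpo]
  · lift n to ℕ using by omega
    have e : ((n : ℤ) + 1).toNat = n + 1 := by omega
    have h3 := (one_sub_pos' h0 h1 n).ne'
    have h4 := (poch_pos h0 h1 n).ne'
    have h5 : x ^ ((n : ℤ) + 1) = x ^ (n + 1) := by exact_mod_cast zpow_natCast x (n + 1)
    rw [rpo, rpo, if_neg (by omega), if_neg (by omega), e, h5, Int.toNat_natCast, poch, poch,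
      Finset.prod_range_succ, ← poch]
    field_simp

lemma rpo_tendsto {x : ℝ} (h0 : 0 < x) (h1 : x < 1) (k : ℤ) :
    Tendsto (fun m : ℕ => rpo x (m + k)) atTop (𝓝 (phiE x)⁻¹) := by
  have h2 : Tendsto (fun m : ℕ => ((m : ℤ) + k).toNat) atTop atTop := by
    refine tendsto_atTop.2 fun b => ?_
    filter_upwards [eventually_ge_atTop (b + k.natAbs)] with m hm
    omega
  refine (((poch_tendsto h0 h1).comp h2).inv₀ (phi_ne h0 h1)).congr' ?_
  filter_upwards [eventually_ge_atTop k.natAbs] with m hm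
  rw [rpo, if_neg (by omega)]; rfl

/-- theta term -/
noncomputable def tt (q v : ℝ) (k : ℤ) : ℝ := q ^ ((k : ℝ) ^ 2 / 2 + v * k)

lemma tt_summable {q : ℝ} (h0 : 0 < q) (h1 : q < 1) (v : ℝ) : Summable (tt q v) := by
  have hl := Real.log_neg h0 h1
  have hp := Real.pi_pos
  have h := ((summable_jacobiTheta₂_term_iff (⟨0, -v * Real.log q / (2 * Real.pi)⟩ : ℂ)
    ⟨0, -Real.log q / (2 * Real.pi)⟩).2 (by
      show 0 < -Real.log q / (2 * Real.pi)
      apply div_pos <;> linarith)).norm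
  refine h.congr fun k => ?_
  rw [norm_jacobiTheta₂_term, tt, Real.rpow_def_of_pos h0]
  congr 1
  field_simp
  ring

lemma finite_jtp {q : ℝ} (h0 : 0 < q) (h1 : q < 1) (v : ℝ) (m : ℕ) :
    HasSum (fun k : ℤ => poch q (2 * m) * rpo q (m + k) * rpo q (m - k) * tt q v k)
      ((∏ n ∈ Finset.range m, (1 + q ^ ((n : ℝ) + 1 / 2 + v))) *
        ∏ n ∈ Finset.range m, (1 + q ^ ((n : ℝ) + 1 / 2 - v))) := by
  induction m with
  | zero =>
    have := hasSum_single (f := fun k : ℤ => poch q (2 * 0) * rpo q ((0 : ℕ) + k) *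
      rpo q ((0 : ℕ) - k) * tt q v k) 0 (by
        intro k hk
        rcases lt_or_gt_of_ne hk with h | h <;> simp [rpo, h])
    simpa [poch, rpo, tt] using this
  | succ m ih =>
    have hL := ((Equiv.subRight (1 : ℤ)).hasSum_iff.2 ih).mul_left (q ^ ((m : ℝ) + 1 / 2 + v))
    have hR := ((Equiv.addRight (1 : ℤ)).hasSum_iff.2 ih).mul_left (q ^ ((m : ℝ) + 1 / 2 - v))
    have hM := ih.mul_left (1 + q ^ (2 * (m : ℝ) + 1))
    have := (hM.add hL).add hR
    rw [Finset.prod_range_succ, Finset.prod_range_succ]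
    have hv : ∀ X Y : ℝ, X * (1 + q ^ ((m : ℝ) + 1 / 2 + v)) * (Y * (1 + q ^ ((m : ℝ) + 1 / 2 - v))) =
        (1 + q ^ (2 * (m : ℝ) + 1)) * (X * Y) + q ^ ((m : ℝ) + 1 / 2 + v) * (X * Y) +
        q ^ ((m : ℝ) + 1 / 2 - v) * (X * Y) := by
      intro X Y
      have : q ^ (2 * (m : ℝ) + 1) = q ^ ((m : ℝ) + 1 / 2 + v) * q ^ ((m : ℝ) + 1 / 2 - v) := by
        rw [← Real.rpow_add h0]; congr 1; ring
      rw [this]; ring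
    rw [hv]
    · convert this using 2 with k
      · rfl
      simp only [Function.comp, Equiv.subRight_apply, Equiv.coe_addRight]
      have e1 : rpo q (m + k) = rpo q ((m + 1 : ℕ) + k) * (1 - q ^ ((m : ℝ) + 1 + k)) := by
        rw [rpo_rec h0 h1, ← Real.rpow_intCast]; push_cast; ring_nf
      have e2 : rpo q (m - k) = rpo q ((m + 1 : ℕ) - k) * (1 - q ^ ((m : ℝ) + 1 - k)) := by
        rw [rpo_rec h0 h1, ← Real.rpow_intCast]; push_cast; ring_nf
      have e3 : rpo q (m + (k - 1)) = rpo q (m + k) * (1 - q ^ ((m : ℝ) + k)) := by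
        rw [rpo_rec h0 h1, ← Real.rpow_intCast]; push_cast; ring_nf
      have e4 : rpo q (m - (k + 1)) = rpo q (m - k) * (1 - q ^ ((m : ℝ) - k)) := by
        rw [rpo_rec h0 h1, ← Real.rpow_intCast]; push_cast; ring_nf
      have e5 : rpo q (m - (k - 1)) = rpo q ((m + 1 : ℕ) - k) := by congr 1; push_cast; ring
      have e6 : rpo q (m + (k + 1)) = rpo q ((m + 1 : ℕ) + k) := by congr 1; push_cast; ring
      have t1 : q ^ ((m : ℝ) + 1 / 2 + v) * tt q v (k - 1) = q ^ ((m : ℝ) + 1 - k) * tt q v k := by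
        rw [tt, tt, ← Real.rpow_add h0, ← Real.rpow_add h0]; congr 1; push_cast; ring
      have t2 : q ^ ((m : ℝ) + 1 / 2 - v) * tt q v (k + 1) = q ^ ((m : ℝ) + 1 + k) * tt q v k := by
        rw [tt, tt, ← Real.rpow_add h0, ← Real.rpow_add h0]; congr 1; push_cast; ring
      have p1 : poch q (2 * (m + 1)) = poch q (2 * m) * (1 - q ^ (2 * (m : ℝ) + 1)) *
          (1 - q ^ (2 * (m : ℝ) + 2)) := by
        rw [show 2 * (m + 1) = 2 * m + 1 + 1 by ring, poch, Finset.prod_range_succ,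
          Finset.prod_range_succ, ← poch, ← Real.rpow_natCast, ← Real.rpow_natCast]
        push_cast; ring_nf
      have a1 : q ^ ((m : ℝ) + 1 + k) = q * q ^ ((m : ℝ) + k) := by
        nth_rw 2 [← Real.rpow_one q]; rw [← Real.rpow_add h0]; congr 1; ring
      have a2 : q ^ ((m : ℝ) + 1 - k) = q * q ^ ((m : ℝ) - k) := by
        nth_rw 2 [← Real.rpow_one q]; rw [← Real.rpow_add h0]; congr 1; ring
      have a3 : q ^ (2 * (m : ℝ) + 1) = q * q ^ ((m : ℝ) + k) * q ^ ((m : ℝ) - k) := by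
        nth_rw 2 [← Real.rpow_one q]; rw [← Real.rpow_add h0, ← Real.rpow_add h0]; congr 1; ring
      have a4 : q ^ (2 * (m : ℝ) + 2) = q * (q * q ^ ((m : ℝ) + k) * q ^ ((m : ℝ) - k)) := by
        rw [← a3]
        nth_rw 2 [← Real.rpow_one q]; rw [← Real.rpow_add h0]; congr 1; ring
      rw [e5, e6, e3, e4, e1, e2, p1]
      have s1 : ∀ X : ℝ, q ^ ((m : ℝ) + 1 / 2 + v) * (X * tt q v (k - 1)) =
          X * (q ^ ((m : ℝ) + 1 - k) * tt q v k) := fun X => by rw [← t1]; ring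
      have s2 : ∀ X : ℝ, q ^ ((m : ℝ) + 1 / 2 - v) * (X * tt q v (k + 1)) =
          X * (q ^ ((m : ℝ) + 1 + k) * tt q v k) := fun X => by rw [← t2]; ring
      rw [s1, s2, a1, a2, a3, a4]
      ring

lemma summable_half {q : ℝ} (h0 : 0 < q) (h1 : q < 1) (v : ℝ) :
    Summable (fun n : ℕ => q ^ ((n : ℝ) + 1 / 2 + v)) := by
  refine ((summable_geometric_of_lt_one h0.le h1).mul_right (q ^ (1 / 2 + v))).congr fun n => ?_
  rw [← Real.rpow_natCast, ← Real.rpow_add h0]; congr 1; ring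

lemma jtp {q : ℝ} (h0 : 0 < q) (h1 : q < 1) (v : ℝ) :
    ∑' k, tt q v k = phiE q * ((∏' n : ℕ, (1 + q ^ ((n : ℝ) + 1 / 2 + v))) *
        ∏' n : ℕ, (1 + q ^ ((n : ℝ) + 1 / 2 - v))) := by
  have hφ := phi_ne h0 h1
  have hT := tendsto_tsum_of_dominated_convergence (𝓕 := atTop)
    (f := fun (m : ℕ) (k : ℤ) => poch q (2 * m) * rpo q (m + k) * rpo q (m - k) * tt q v k)
    (g := fun k => phiE q * (phiE q)⁻¹ * (phiE q)⁻¹ * tt q v k)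
    (bound := fun k => 1 * (phiE q)⁻¹ * (phiE q)⁻¹ * tt q v k)
    ((tt_summable h0 h1 v).mul_left _)
    (fun k => by
      refine Tendsto.mul_const _ (Tendsto.mul (Tendsto.mul ?_ (rpo_tendsto h0 h1 k)) ?_)
      · exact (poch_tendsto h0 h1).comp (tendsto_id.const_mul_atTop' (by norm_num))
      · simpa [sub_eq_add_neg] using rpo_tendsto h0 h1 (-k))
    (Eventually.of_forall fun m k => by
      have a := (poch_pos h0 h1 (2 * m)).le
      have b := rpo_nonneg h0 h1 (m + k)
      have c := rpo_nonneg h0 h1 (m - k)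
      have d : 0 ≤ tt q v k := (Real.rpow_pos_of_pos h0 _).le
      have e := phi_pos h0 h1
      rw [Real.norm_of_nonneg (by positivity)]
      gcongr
      · exact poch_le_one h0 h1 _
      · exact rpo_le h0 h1 _
      · exact rpo_le h0 h1 _)
  have hT2 : Tendsto (fun m : ℕ => ∑' k : ℤ, poch q (2 * m) * rpo q (m + k) * rpo q (m - k) *
      tt q v k) atTop (𝓝 ((∏' n : ℕ, (1 + q ^ ((n : ℝ) + 1 / 2 + v))) *
        ∏' n : ℕ, (1 + q ^ ((n : ℝ) + 1 / 2 - v)))) := by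
    simp_rw [fun m : ℕ => (finite_jtp h0 h1 v m).tsum_eq]
    refine Tendsto.mul (mult_plus (summable_half h0 h1 v)).tendsto_prod_tprod_nat ?_
    exact (mult_plus (f := fun n : ℕ => q ^ ((n : ℝ) + 1 / 2 - v)) (by
      simpa [sub_eq_add_neg] using summable_half h0 h1 (-v))).tendsto_prod_tprod_nat
  have := tendsto_nhds_unique hT hT2
  rw [← this, tsum_mul_left]
  field_simp

lemma pi_hasSum (n : ℕ) (f : Fin n → ℤ → ℝ) (h0 : ∀ i k, 0 ≤ f i k) (hs : ∀ i, Summable (f i)) :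
    HasSum (fun k : Fin n → ℤ => ∏ i, f i (k i)) (∏ i, ∑' k, f i k) := by
  induction n with
  | zero => simp
  | succ n ih =>
    have h1 := ih (fun i => f i.succ) (fun i k => h0 _ k) (fun i => hs _)
    have h2 := (hs 0).mul_of_nonneg h1.summable (h0 0)
      (fun k => Finset.prod_nonneg fun i _ => h0 _ _)
    have h3 := (hs 0).hasSum.mul h1 h2
    rw [Fin.prod_univ_succ, ← (Fin.consEquiv (fun _ => ℤ)).hasSum_iff]
    convert h3 using 2 with k
    · rfl
    · simp [Fin.consEquiv, Fin.prod_univ_succ]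

lemma even_half (n : ℕ) (F : (Fin (n + 1) → ℤ) → ℝ) (hF : Summable F)
    (hσ : ∀ k, F (Function.update k 0 (-1 - k 0)) = F k) :
    ∑' k : {k : Fin (n + 1) → ℤ // Even (∑ i, k i)}, F k.1 = (∑' k, F k) / 2 := by
  have hinv : Function.Involutive
      (fun k : Fin (n + 1) → ℤ => Function.update k 0 (-1 - k 0)) := by
    intro k; simp
  let S : Set (Fin (n + 1) → ℤ) := {k | Even (∑ i, k i)}
  have a : ∑' k : {k : Fin (n + 1) → ℤ // Even (∑ i, k i)}, F k.1 = ∑' k, S.indicator F k :=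
    tsum_subtype S F
  have b : ∑' k, Sᶜ.indicator F k = ∑' k, S.indicator F k := by
    rw [← (hinv.toPerm _).tsum_eq (S.indicator F)]
    congr 1
    ext k
    have hk : hinv.toPerm _ k ∈ S ↔ k ∈ Sᶜ := by
      simp only [S, Function.Involutive.coe_toPerm, Set.mem_setOf_eq, Set.mem_compl_iff,
        Fin.sum_univ_succ, Function.update_self, ne_eq, Fin.succ_ne_zero, not_false_eq_true,
        Function.update_of_ne]
      generalize k 0 = x
      generalize ∑ i : Fin n, k i.succ = y
      rw [Int.even_iff, Int.even_iff]; omega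
    by_cases h : k ∈ Sᶜ
    · rw [Set.indicator_of_mem h, Set.indicator_of_mem (hk.2 h)]; exact (hσ k).symm
    · rw [Set.indicator_of_notMem h, Set.indicator_of_notMem (fun h' => h (hk.1 h'))]
  have c : ∑' k, F k = ∑' k, S.indicator F k + ∑' k, Sᶜ.indicator F k := by
    rw [← (hF.indicator S).tsum_add (hF.indicator Sᶜ)]
    congr 1; ext k
    rw [← Pi.add_apply, Set.indicator_self_add_compl]
  rw [a, c, b]; ring

lemma fin_regroup (M : ℕ) (E : ℕ → ℝ) (L : ℕ) :
    ∏ j ∈ Finset.range (M + 1), ((∏ n ∈ Finset.range L, E (2 * M * n + M + j)) *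
      ∏ n ∈ Finset.range L, E (2 * M * n + M - j)) =
    (∏ x ∈ Finset.range (2 * M * L), E x) * ∏ y ∈ Finset.range (2 * L), E (M * (y + 1)) := by
  induction L with
  | zero => simp
  | succ L ih =>
    rw [show 2 * M * (L + 1) = 2 * M * L + M + M by ring, show 2 * (L + 1) = 2 * L + 1 + 1 by ring,
      Finset.prod_range_succ _ (2 * L + 1), Finset.prod_range_succ _ (2 * L),
      Finset.prod_range_add _ (2 * M * L + M), Finset.prod_range_add _ (2 * M * L)]
    simp_rw [Finset.prod_range_succ _ L]
    simp only [Finset.prod_mul_distrib] at ih ⊢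
    have h1 : ∏ j ∈ Finset.range (M + 1), E (2 * M * L + M + j) =
        (∏ j ∈ Finset.range M, E (2 * M * L + M + j)) * E (M * (2 * L + 1 + 1)) := by
      rw [Finset.prod_range_succ]; congr 2; ring
    have h2 : ∏ j ∈ Finset.range (M + 1), E (2 * M * L + M - j) =
        (∏ j ∈ Finset.range M, E (2 * M * L + j)) * E (M * (2 * L + 1)) := by
      rw [← Finset.prod_range_reflect, Finset.prod_range_succ]
      congr 1
      · refine Finset.prod_congr rfl fun j hj => ?_
        rw [Finset.mem_range] at hj
        congr 1; omega
      · congr 1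
        rw [show M + 1 - 1 - M = 0 by omega, Nat.sub_zero]; ring
    rw [h1, h2]
    linear_combination (∏ j ∈ Finset.range M, E (2 * M * L + M + j)) * E (M * (2 * L + 1 + 1)) *
      ((∏ j ∈ Finset.range M, E (2 * M * L + j)) * E (M * (2 * L + 1))) * ih

lemma prod_regroup {q : ℝ} (h0 : 0 < q) (h1 : q < 1) (M : ℕ) (hM : 1 ≤ M) :
    ∏ j ∈ Finset.range (M + 1),
      ((∏' n : ℕ, (1 + q ^ ((n : ℝ) + 1 / 2 + (j : ℝ) / (2 * M)))) *
        ∏' n : ℕ, (1 + q ^ ((n : ℝ) + 1 / 2 - (j : ℝ) / (2 * M)))) =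
    (∏' x : ℕ, (1 + (q ^ ((1 : ℝ) / (2 * M))) ^ x)) *
      ∏' y : ℕ, (1 + (q ^ ((1 : ℝ) / 2)) ^ (y + 1)) := by
  have hM0 : (0 : ℝ) < M := by exact_mod_cast hM
  have hM' : (M : ℝ) ≠ 0 := hM0.ne'
  set p := q ^ ((1 : ℝ) / (2 * M)) with hp
  have p0 : 0 < p := Real.rpow_pos_of_pos h0 _
  have p1 : p < 1 := Real.rpow_lt_one h0.le h1 (by positivity)
  set s := q ^ ((1 : ℝ) / 2) with hs
  have s0 : 0 < s := Real.rpow_pos_of_pos h0 _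
  have s1 : s < 1 := Real.rpow_lt_one h0.le h1 (by positivity)
  have pe : ∀ x : ℕ, p ^ x = q ^ ((x : ℝ) / (2 * M)) := fun x => by
    rw [hp, ← Real.rpow_natCast, ← Real.rpow_mul h0.le]; congr 1; ring
  have se : ∀ x : ℕ, s ^ x = p ^ (M * x) := fun x => by
    rw [pe, hs, ← Real.rpow_natCast, ← Real.rpow_mul h0.le]; congr 1; push_cast; field_simp
  have T1 : Tendsto (fun L : ℕ => ∏ j ∈ Finset.range (M + 1),
      ((∏ n ∈ Finset.range L, (1 + q ^ ((n : ℝ) + 1 / 2 + (j : ℝ) / (2 * M)))) *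
        ∏ n ∈ Finset.range L, (1 + q ^ ((n : ℝ) + 1 / 2 - (j : ℝ) / (2 * M))))) atTop
      (𝓝 (∏ j ∈ Finset.range (M + 1),
      ((∏' n : ℕ, (1 + q ^ ((n : ℝ) + 1 / 2 + (j : ℝ) / (2 * M)))) *
        ∏' n : ℕ, (1 + q ^ ((n : ℝ) + 1 / 2 - (j : ℝ) / (2 * M)))))) := by
    refine tendsto_finsetProd _ fun j _ => Tendsto.mul ?_ ?_
    · exact (mult_plus (summable_half h0 h1 _)).tendsto_prod_tprod_nat
    · exact (mult_plus (f := fun n : ℕ => q ^ ((n : ℝ) + 1 / 2 - (j : ℝ) / (2 * M))) (by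
        simpa [sub_eq_add_neg] using
          summable_half h0 h1 (-((j : ℝ) / (2 * M))))).tendsto_prod_tprod_nat
  have T2 : Tendsto (fun L : ℕ => (∏ x ∈ Finset.range (2 * M * L), (1 + p ^ x)) *
      ∏ y ∈ Finset.range (2 * L), (1 + s ^ (y + 1))) atTop
      (𝓝 ((∏' x : ℕ, (1 + p ^ x)) * ∏' y : ℕ, (1 + s ^ (y + 1)))) := by
    refine Tendsto.mul ?_ ?_
    · exact (mult_plus (summable_geometric_of_lt_one p0.le p1)).tendsto_prod_tprod_nat.comp
        (tendsto_id.const_mul_atTop' (by omega))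
    · exact (mult_plus (summable_pow_succ s0 s1)).tendsto_prod_tprod_nat.comp
        (tendsto_id.const_mul_atTop' (by omega))
  refine tendsto_nhds_unique (T1.congr fun L => ?_) T2
  have := fin_regroup M (fun x => 1 + p ^ x) L
  simp only [se]
  rw [← this]
  refine Finset.prod_congr rfl fun j hj => ?_
  rw [Finset.mem_range] at hj
  congr 1
  · refine Finset.prod_congr rfl fun n _ => ?_
    rw [pe]; congr 2; push_cast; field_simp
  · refine Finset.prod_congr rfl fun n _ => ?_
    rw [pe, Nat.cast_sub (by omega)]; congr 2; push_cast; field_simp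

lemma euler_plus {x : ℝ} (h0 : 0 < x) (h1 : x < 1) :
    ∏' n : ℕ, (1 + x ^ (n + 1)) = phiE (x ^ 2) / phiE x := by
  rw [eq_div_iff (phi_ne h0 h1), phiE, phiE,
    ← (mult_plus (summable_pow_succ h0 h1)).tprod_mul (mult_phi h0 h1)]
  congr 1; ext n; ring

lemma eta_eq (x : ℝ) : dedekindEta x = x ^ ((1 : ℝ) / 24) * phiE x := rfl

lemma theta_eq {q : ℝ} (h0 : 0 < q) (v : ℝ) (k : ℤ) :
    q ^ ((1 / 2 : ℝ) * ((k : ℝ) + v) ^ 2) = q ^ (v ^ 2 / 2) * tt q v k := by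
  rw [tt, ← Real.rpow_add h0]; congr 1; ring

lemma sum_sq (M : ℕ) : ∑ j ∈ Finset.range (M + 1), (j : ℝ) ^ 2 = M * (M + 1) * (2 * M + 1) / 6 := by
  induction M with
  | zero => simp
  | succ n ih => rw [Finset.sum_range_succ, ih]; push_cast; ring

lemma main_aux (M : ℕ) (hM : 1 ≤ M) (q : ℝ) (h0 : 0 < q) (h1 : q < 1) :
    (∑' k : {k : Fin (M + 1) → ℤ // Even (∑ i, k i)},
        q ^ ((1 / 2 : ℝ) * ∑ i : Fin (M + 1),
          ((k.1 i : ℝ) + ((M : ℝ) - (i.val : ℝ)) / (2 * (M : ℝ))) ^ 2)) =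
      dedekindEta q ^ (M + 1 + 1) * dedekindEta (q ^ ((1 : ℝ) / (M : ℝ))) /
        (dedekindEta (q ^ ((1 : ℝ) / 2)) *
          dedekindEta (q ^ ((1 : ℝ) / (2 * (M : ℝ))))) := by
  have hM0 : (0 : ℝ) < M := by exact_mod_cast hM
  have hM' : (M : ℝ) ≠ 0 := hM0.ne'
  let v : Fin (M + 1) → ℝ := fun i => ((M : ℝ) - (i.val : ℝ)) / (2 * (M : ℝ))
  let f : Fin (M + 1) → ℤ → ℝ := fun i k => q ^ ((1 / 2 : ℝ) * ((k : ℝ) + v i) ^ 2)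
  have hfs : ∀ i, Summable (f i) := fun i => by
    refine ((tt_summable h0 h1 (v i)).mul_left (q ^ (v i ^ 2 / 2))).congr fun k => ?_
    exact (theta_eq h0 _ _).symm
  have hP := pi_hasSum (M + 1) f (fun i k => (Real.rpow_pos_of_pos h0 _).le) hfs
  have e1 : ∀ k : Fin (M + 1) → ℤ, q ^ ((1 / 2 : ℝ) * ∑ i : Fin (M + 1),
          ((k i : ℝ) + ((M : ℝ) - (i.val : ℝ)) / (2 * (M : ℝ))) ^ 2) = ∏ i, f i (k i) := fun k => by
    rw [Finset.mul_sum, Real.rpow_sum_of_pos h0]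
  simp_rw [e1]
  rw [even_half M (fun k => ∏ i, f i (k i)) hP.summable, hP.tsum_eq]
  swap
  · intro k
    simp only [Fin.prod_univ_succ, Function.update_self, ne_eq, Fin.succ_ne_zero,
      not_false_eq_true, Function.update_of_ne]
    congr 1
    simp only [f, v]
    congr 2
    push_cast
    simp only [Fin.val_zero]
    field_simp
    push_cast
    ring
  have e2 : ∀ i, ∑' k, f i k = q ^ (v i ^ 2 / 2) * (phiE q *
      ((∏' n : ℕ, (1 + q ^ ((n : ℝ) + 1 / 2 + v i))) *
        ∏' n : ℕ, (1 + q ^ ((n : ℝ) + 1 / 2 - v i)))) := fun i => by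
    rw [← jtp h0 h1, ← tsum_mul_left]
    exact tsum_congr fun k => theta_eq h0 _ _
  simp_rw [e2]
  let G : ℝ → ℝ := fun w => q ^ (w ^ 2 / 2) * (phiE q *
      ((∏' n : ℕ, (1 + q ^ ((n : ℝ) + 1 / 2 + w))) *
        ∏' n : ℕ, (1 + q ^ ((n : ℝ) + 1 / 2 - w))))
  have e3 : ∏ i, G (v i) = ∏ j ∈ Finset.range (M + 1), G ((j : ℝ) / (2 * M)) := by
    rw [Fin.prod_univ_eq_prod_range (fun i : ℕ => G (((M : ℝ) - (i : ℝ)) / (2 * (M : ℝ)))) (M + 1),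
      ← Finset.prod_range_reflect]
    refine Finset.prod_congr rfl fun j hj => ?_
    rw [Finset.mem_range] at hj
    rw [show M + 1 - 1 - j = M - j by omega, Nat.cast_sub (by omega)]
    congr 2; ring
  change (∏ i, G (v i)) / 2 = _
  rw [e3]
  simp only [G]
  rw [Finset.prod_mul_distrib, Finset.prod_mul_distrib, prod_regroup h0 h1 M hM,
    ← Real.rpow_sum_of_pos h0, Finset.prod_const, Finset.card_range]
  have p0 : 0 < q ^ ((1 : ℝ) / (2 * M)) := Real.rpow_pos_of_pos h0 _
  have p1 : q ^ ((1 : ℝ) / (2 * M)) < 1 := Real.rpow_lt_one h0.le h1 (by positivity)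
  have s0 : 0 < q ^ ((1 : ℝ) / 2) := Real.rpow_pos_of_pos h0 _
  have s1 : q ^ ((1 : ℝ) / 2) < 1 := Real.rpow_lt_one h0.le h1 (by positivity)
  rw [tprod_eq_zero_mul' (f := fun x : ℕ => 1 + (q ^ ((1 : ℝ) / (2 * M))) ^ x)
    (mult_plus (summable_pow_succ p0 p1)),
    euler_plus p0 p1, euler_plus s0 s1]
  have q1 : (q ^ ((1 : ℝ) / (2 * M))) ^ 2 = q ^ ((1 : ℝ) / M) := by
    rw [← Real.rpow_natCast, ← Real.rpow_mul h0.le]; congr 1; push_cast; field_simp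
  have q2 : (q ^ ((1 : ℝ) / 2)) ^ 2 = q := by
    rw [← Real.rpow_natCast, ← Real.rpow_mul h0.le]; norm_num
  rw [q1, q2]
  simp only [eta_eq]
  have hp := phi_ne p0 p1
  have hs := phi_ne s0 s1
  have ex : q ^ (∑ j ∈ Finset.range (M + 1), ((j : ℝ) / (2 * M)) ^ 2 / 2) *
      ((q ^ ((1 : ℝ) / 2)) ^ ((1 : ℝ) / 24) * (q ^ ((1 : ℝ) / (2 * M))) ^ ((1 : ℝ) / 24)) =
      (q ^ ((1 : ℝ) / 24)) ^ (M + 1 + 1) * (q ^ ((1 : ℝ) / M)) ^ ((1 : ℝ) / 24) := by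
    rw [← Real.rpow_natCast, ← Real.rpow_mul h0.le, ← Real.rpow_mul h0.le, ← Real.rpow_mul h0.le,
      ← Real.rpow_mul h0.le, ← Real.rpow_add h0, ← Real.rpow_add h0, ← Real.rpow_add h0]
    congr 1
    simp_rw [div_pow]
    rw [← Finset.sum_div, ← Finset.sum_div, sum_sq]
    push_cast
    field_simp
    ring
  have r1 : (q ^ ((1 : ℝ) / 2)) ^ ((1 : ℝ) / 24) ≠ 0 := (Real.rpow_pos_of_pos s0 _).ne'
  have r2 : (q ^ ((1 : ℝ) / (2 * M))) ^ ((1 : ℝ) / 24) ≠ 0 := (Real.rpow_pos_of_pos p0 _).ne'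
  rw [eq_div_iff (mul_ne_zero (mul_ne_zero r1 hs) (mul_ne_zero r2 hp))]
  generalize phiE (q ^ ((1 : ℝ) / (2 * M))) = A at *
  generalize phiE (q ^ ((1 : ℝ) / 2)) = B at *
  rw [mul_pow]
  have cl : ∀ X Y U V W Z : ℝ, X * (Y * ((1 + 1) * (U / A) * (V / B))) / 2 * (W * B * (Z * A)) =
      X * (W * Z) * (Y * U * V) := by
    intro X Y U V W Z; field_simp; ring
  rw [pow_zero, cl, ex]
  ring

end aux

/-- Macdonald-type product formula for the `D_N` lattice theta function at
    `ρ/h`, with `h = 2(N−1)` and `ρ = (N−1, N−2, …, 1, 0)`. -/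
theorem stmt5 (N : ℕ) (hN : 2 ≤ N) (q : ℝ) (hq0 : 0 < q) (hq1 : q < 1) :
    (∑' k : {k : Fin N → ℤ // Even (∑ i, k i)},
        q ^ ((1 / 2 : ℝ) * ∑ i : Fin N,
          ((k.1 i : ℝ) + ((N : ℝ) - 1 - (i.val : ℝ)) / (2 * ((N : ℝ) - 1))) ^ 2)) =
      dedekindEta q ^ (N + 1) * dedekindEta (q ^ ((1 : ℝ) / ((N : ℝ) - 1))) /
        (dedekindEta (q ^ ((1 : ℝ) / 2)) *
          dedekindEta (q ^ ((1 : ℝ) / (2 * ((N : ℝ) - 1))))) := by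
  obtain ⟨M, rfl⟩ : ∃ M, N = M + 1 := ⟨N - 1, by omega⟩
  have h := main_aux M (by omega) q hq0 hq1
  have e : ((M + 1 : ℕ) : ℝ) - 1 = M := by push_cast; ring
  simp only [e]
  exact h
end

section
/- For every real q with 0 < q < 1 one has ∏_{k=0}^∞ (1 + q^(k+1/2))² = (∑_{n∈ℤ} q^(n²/2)) / ∏_{k=1}^∞ (1 − q^k). -/
open scoped BigOperators

/-- Gaussian binomial coefficients. -/
noncomputable def gaussB (q : ℝ) : ℕ → ℕ → ℝ
  | _, 0 => 1
  | 0, _ + 1 => 0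
  | n + 1, k + 1 => gaussB q n k + q ^ (k + 1) * gaussB q n (k + 1)

/-- The finite products `(q;q)_n`. -/
noncomputable def qPoch (q : ℝ) (n : ℕ) : ℝ := ∏ k ∈ Finset.range n, (1 - q ^ (k + 1))

lemma gaussB_zero (q : ℝ) (n : ℕ) : gaussB q n 0 = 1 := by cases n <;> simp [gaussB]

lemma gaussB_lt (q : ℝ) (n : ℕ) : ∀ k, n < k → gaussB q n k = 0 := by
  induction n with
  | zero => intro k hk; obtain ⟨k, rfl⟩ : ∃ m, k = m + 1 := ⟨k - 1, by omega⟩; simp [gaussB]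
  | succ n ih =>
    intro k hk
    obtain ⟨k, rfl⟩ : ∃ m, k = m + 1 := ⟨k - 1, by omega⟩
    simp [gaussB, ih k (by omega), ih (k + 1) (by omega)]

lemma gaussB_self (q : ℝ) (n : ℕ) : gaussB q n n = 1 := by
  induction n with
  | zero => simp [gaussB]
  | succ n ih => simp [gaussB, ih, gaussB_lt q n (n + 1) (by omega)]

lemma qPoch_succ (q : ℝ) (n : ℕ) : qPoch q (n + 1) = qPoch q n * (1 - q ^ (n + 1)) := by
  simp [qPoch, Finset.prod_range_succ]

lemma gaussB_mul (q : ℝ) (s : ℕ) : ∀ j m, j + m = s →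
    gaussB q (j + m) j * (qPoch q j * qPoch q m) = qPoch q (j + m) := by
  induction s with
  | zero =>
    intro j m h
    obtain ⟨rfl, rfl⟩ : j = 0 ∧ m = 0 := by omega
    simp [gaussB, qPoch]
  | succ s ih =>
    intro j m h
    rcases j with _ | j
    · simp [gaussB_zero, qPoch]
    rcases m with _ | m
    · simp only [add_zero, gaussB_self]; simp [qPoch]
    have h1 := ih j (m + 1) (by omega)
    have h2 := ih (j + 1) m (by omega)
    have e1 : j + 1 + (m + 1) = (j + m + 1) + 1 := by ring
    have e2 : j + (m + 1) = j + m + 1 := by ring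
    have e3 : j + 1 + m = j + m + 1 := by ring
    rw [e2] at h1
    rw [e3] at h2
    rw [e1, gaussB, qPoch_succ q (j + m + 1)]
    rw [qPoch_succ q m] at h1 ⊢
    rw [qPoch_succ q j] at h2 ⊢
    linear_combination (1 - q ^ (j + 1)) * h1 + q ^ (j + 1) * (1 - q ^ (m + 1)) * h2

lemma qbinom (q : ℝ) (M : ℕ) : ∀ x : ℝ, ∏ k ∈ Finset.range M, (1 + x * q ^ k) =
    ∑ j ∈ Finset.range (M + 1), gaussB q M j * q ^ (j.choose 2) * x ^ j := by
  induction M with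
  | zero => intro x; simp [gaussB]
  | succ M ih =>
    intro x
    rw [Finset.prod_range_succ']
    have h := ih (x * q)
    have hprod : ∏ k ∈ Finset.range M, (1 + x * q ^ (k + 1)) =
        ∏ k ∈ Finset.range M, (1 + x * q * q ^ k) :=
      Finset.prod_congr rfl fun k _ => by ring
    rw [hprod, h, Finset.sum_range_succ' (fun j => gaussB q (M + 1) j * q ^ (j.choose 2) * x ^ j)]
    have key : ∀ j, gaussB q (M + 1) (j + 1) * q ^ ((j + 1).choose 2) * x ^ (j + 1) =
        gaussB q M (j + 1) * q ^ ((j + 1).choose 2) * (x * q) ^ (j + 1)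
        + x * (gaussB q M j * q ^ (j.choose 2) * (x * q) ^ j) := by
      intro j
      have : (j + 1).choose 2 = j + j.choose 2 := by
        rw [Nat.choose_succ_succ' j 1]; simp
      rw [gaussB, this]; ring
    rw [Finset.sum_congr rfl fun j _ => key j, Finset.sum_add_distrib, ← Finset.mul_sum,
      Finset.sum_range_succ (fun j => gaussB q M (j + 1) * q ^ ((j + 1).choose 2) * (x * q) ^ (j + 1)),
      gaussB_lt q M (M + 1) (by omega),
      Finset.sum_range_succ' (fun j => gaussB q M j * q ^ (j.choose 2) * (x * q) ^ j)]
    simp [gaussB_zero]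
    ring

lemma prod_odd (q : ℝ) (hq0 : 0 < q) (N : ℕ) :
    ∏ k ∈ Finset.range N, q ^ ((k : ℝ) + 1 / 2) = q ^ ((N : ℝ) ^ 2 / 2) := by
  induction N with
  | zero => simp
  | succ n ih =>
    rw [Finset.prod_range_succ, ih, ← Real.rpow_add hq0]; congr 1; push_cast; ring

lemma finite_jtp_s7 (q : ℝ) (hq0 : 0 < q) (N : ℕ) :
    ∏ k ∈ Finset.range N, (1 + q ^ ((k : ℝ) + 1 / 2)) ^ 2 =
    ∑ j ∈ Finset.range (2 * N + 1), gaussB q (2 * N) j * q ^ (((j : ℝ) - N) ^ 2 / 2) := by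
  have h := qbinom q (2 * N) (q ^ ((1 : ℝ) / 2 - N))
  have hL : q ^ ((N : ℝ) ^ 2 / 2) * ∏ k ∈ Finset.range (2 * N), (1 + q ^ ((1 : ℝ) / 2 - N) * q ^ k)
      = ∏ k ∈ Finset.range N, (1 + q ^ ((k : ℝ) + 1 / 2)) ^ 2 := by
    rw [two_mul, Finset.prod_range_add, ← prod_odd q hq0 N,
      ← Finset.prod_range_reflect (fun k => 1 + q ^ ((1 : ℝ) / 2 - N) * q ^ k) N, ← mul_assoc,
      ← Finset.prod_mul_distrib, ← Finset.prod_mul_distrib]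
    refine Finset.prod_congr rfl fun k hk => ?_
    have hk := Finset.mem_range.1 hk
    have e1 : q ^ ((1 : ℝ) / 2 - N) * q ^ (N + k) = q ^ ((k : ℝ) + 1 / 2) := by
      rw [← Real.rpow_natCast, ← Real.rpow_add hq0]; congr 1; push_cast; ring
    have e2 : q ^ ((k : ℝ) + 1 / 2) * (q ^ ((1 : ℝ) / 2 - N) * q ^ (N - 1 - k)) = 1 := by
      rw [← Real.rpow_natCast, ← Real.rpow_add hq0, ← Real.rpow_add hq0]
      have : ((N - 1 - k : ℕ) : ℝ) = N - 1 - k := by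
        rw [Nat.sub_sub, Nat.cast_sub (by omega)]; push_cast; ring
      rw [this]
      convert Real.rpow_zero q using 2
      ring
    rw [e1]; linear_combination (1 + q ^ ((k : ℝ) + 1 / 2)) * e2
  rw [← hL, h, Finset.mul_sum]
  refine Finset.sum_congr rfl fun j _ => ?_
  have : q ^ ((N : ℝ) ^ 2 / 2) * (q ^ (j.choose 2) * (q ^ ((1 : ℝ) / 2 - N)) ^ j) =
      q ^ (((j : ℝ) - N) ^ 2 / 2) := by
    rw [← Real.rpow_natCast q, ← Real.rpow_mul_natCast hq0.le, ← Real.rpow_add hq0,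
      ← Real.rpow_add hq0, Nat.cast_choose_two]
    congr 1; ring
  rw [← this]; ring

lemma summable_gauss (q : ℝ) (hq0 : 0 < q) (hq1 : q < 1) :
    Summable fun n : ℤ => q ^ ((n : ℝ) ^ 2 / 2) := by
  have hb : Summable fun n : ℕ => q ^ ((n : ℝ) ^ 2 / 2) := by
    have hg : Summable fun n : ℕ => (q ^ ((1 : ℝ) / 2)) ^ n :=
      summable_geometric_of_lt_one (by positivity) (Real.rpow_lt_one hq0.le hq1 (by norm_num))
    refine Summable.of_nonneg_of_le (fun n => by positivity) (fun n => ?_) hg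
    rw [← Real.rpow_mul_natCast hq0.le]
    apply Real.rpow_le_rpow_of_exponent_ge hq0 hq1.le
    have : (n : ℝ) ≤ (n : ℝ) ^ 2 := by exact_mod_cast Nat.le_self_pow two_ne_zero n
    linarith
  refine Summable.of_nat_of_neg ?_ ?_
  · simpa using hb
  · simpa using hb

lemma summable_q (q : ℝ) (hq0 : 0 < q) (hq1 : q < 1) : Summable fun k : ℕ => q ^ (k + 1) :=
  (summable_nat_add_iff 1).2 (summable_geometric_of_lt_one hq0.le hq1)

theorem stmt7 (q : ℝ) (hq0 : 0 < q) (hq1 : q < 1) :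
    (∏' k : ℕ, (1 + q ^ ((k : ℝ) + 1 / 2)) ^ 2) =
      (∑' n : ℤ, q ^ ((n : ℝ) ^ 2 / 2)) / ∏' k : ℕ, (1 - q ^ (k + 1)) := by
  have hfac : ∀ k : ℕ, 0 < 1 - q ^ (k + 1) := fun k => by
    have := pow_lt_one₀ hq0.le hq1 (Nat.succ_ne_zero k)
    simp only [Nat.succ_eq_add_one] at this
    linarith
  have hpos : ∀ n, 0 < qPoch q n := fun n => Finset.prod_pos fun k _ => hfac k
  have hmul : Multipliable fun k : ℕ => (1 - q ^ (k + 1)) := by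
    simpa [sub_eq_add_neg] using
      Real.multipliable_one_add_of_summable (summable_q q hq0 hq1).neg
  set L := ∏' k : ℕ, (1 - q ^ (k + 1)) with hLdef
  have hlim : Filter.Tendsto (qPoch q) Filter.atTop (nhds L) := hmul.tendsto_prod_tprod_nat
  have hanti : Antitone (qPoch q) := antitone_nat_of_succ_le fun n => by
    rw [qPoch_succ]
    have : 0 < q ^ (n + 1) := by positivity
    nlinarith [hpos n]
  have hLle : ∀ n, L ≤ qPoch q n := fun n => hanti.le_of_tendsto hlim n
  have hL0 : L ≠ 0 := by
    have := tprod_one_add_ne_zero_of_summable (f := fun k : ℕ => - q ^ (k + 1))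
      (fun k => by have := hfac k; rw [← sub_eq_add_neg]; exact this.ne')
      (by simpa [abs_of_pos hq0] using summable_q q hq0 hq1)
    simpa [sub_eq_add_neg, hLdef] using this
  have hLpos : 0 < L := lt_of_le_of_ne (ge_of_tendsto' hlim fun n => (hpos n).le) hL0.symm
  have hgb : ∀ j m, gaussB q (j + m) j = qPoch q (j + m) / (qPoch q j * qPoch q m) := fun j m => by
    rw [eq_div_iff (mul_pos (hpos _) (hpos _)).ne']; exact gaussB_mul q _ j m rfl
  have hgN : ∀ (N : ℕ) (n : ℤ), n ∈ Finset.Icc (-(N : ℤ)) N → gaussB q (2 * N) (N + n).toNat =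
      qPoch q (2 * N) / (qPoch q (N + n).toNat * qPoch q (N - n).toNat) := fun N n hn => by
    rw [Finset.mem_Icc] at hn
    have := hgb (N + n).toNat (N - n).toNat
    rwa [show (N + n).toNat + (N - n).toNat = 2 * N by omega] at this
  let F : ℕ → ℤ → ℝ := fun N n => if n ∈ Finset.Icc (-(N : ℤ)) N then
    gaussB q (2 * N) (N + n).toNat * q ^ ((n : ℝ) ^ 2 / 2) else 0
  have hF : ∀ N, ∑' n, F N n = ∏ k ∈ Finset.range N, (1 + q ^ ((k : ℝ) + 1 / 2)) ^ 2 := by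
    intro N
    rw [finite_jtp_s7 q hq0, tsum_eq_sum (s := Finset.Icc (-(N : ℤ)) N) fun n hn => if_neg hn]
    refine Finset.sum_nbij' (fun n => (N + n).toNat) (fun j => (j : ℤ) - N) ?_ ?_ ?_ ?_ ?_
    · intro n hn; simp only [Finset.mem_Icc, Finset.mem_range] at *; omega
    · intro n hn; simp only [Finset.mem_Icc, Finset.mem_range] at *; omega
    · intro n hn; simp only [Finset.mem_Icc] at *; omega
    · intro n hn; simp
    · intro n hn
      simp only [F, if_pos hn]
      rw [Finset.mem_Icc] at hn
      have : (((N + n).toNat : ℕ) : ℝ) = N + n := by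
        have : (((N + n).toNat : ℕ) : ℤ) = N + n := by omega
        exact_mod_cast this
      rw [this]; simp
  have hT : Filter.Tendsto (fun N => ∑' n, F N n) Filter.atTop
      (nhds (∑' n : ℤ, 1 / L * q ^ ((n : ℝ) ^ 2 / 2))) := by
    refine tendsto_tsum_of_dominated_convergence
      (bound := fun n : ℤ => 1 / L * q ^ ((n : ℝ) ^ 2 / 2))
      ((summable_gauss q hq0 hq1).mul_left _) ?_ ?_
    · intro n
      have t1 : Filter.Tendsto (fun N : ℕ => 2 * N) Filter.atTop Filter.atTop :=
        Filter.tendsto_atTop_mono (fun N => by simp only [id]; omega) Filter.tendsto_id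
      have t2 : ∀ n : ℤ, Filter.Tendsto (fun N : ℕ => (N + n).toNat) Filter.atTop Filter.atTop :=
        fun n => Filter.tendsto_atTop.2 fun b => Filter.eventually_atTop.2
          ⟨b + n.natAbs, fun N hN => by omega⟩
      have t3 := (hlim.comp t1).div ((hlim.comp (t2 n)).mul (hlim.comp (t2 (-n))))
        (mul_ne_zero hL0 hL0)
      have e : L / (L * L) = 1 / L := by field_simp
      rw [e] at t3
      refine (t3.mul_const (q ^ ((n : ℝ) ^ 2 / 2))).congr' ?_
      filter_upwards [Filter.eventually_ge_atTop n.natAbs] with N hN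
      have hn : n ∈ Finset.Icc (-(N : ℤ)) N := by rw [Finset.mem_Icc]; omega
      simp only [F, if_pos hn, hgN N n hn]
      simp [sub_eq_add_neg]
    · refine Filter.Eventually.of_forall fun N n => ?_
      have hr : 0 < q ^ ((n : ℝ) ^ 2 / 2) := by positivity
      by_cases hn : n ∈ Finset.Icc (-(N : ℤ)) N
      · simp only [F, if_pos hn, hgN N n hn]
        have h1 := hpos (N + n).toNat
        have h2 := hpos (N - n).toNat
        rw [Real.norm_of_nonneg (mul_nonneg (div_nonneg (hpos _).le (mul_pos h1 h2).le) hr.le)]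
        refine mul_le_mul_of_nonneg_right ?_ hr.le
        rw [div_le_div_iff₀ (mul_pos h1 h2) hLpos]
        have h3 : qPoch q (2 * N) ≤ qPoch q (N + n).toNat := hanti (by
          rw [Finset.mem_Icc] at hn; omega)
        rw [one_mul]
        exact mul_le_mul h3 (hLle _) hLpos.le h1.le
      · simp only [F, if_neg hn, norm_zero]; positivity
  have hmul2 : Multipliable fun k : ℕ => (1 + q ^ ((k : ℝ) + 1 / 2)) := by
    refine Real.multipliable_one_add_of_summable ?_
    have := (summable_geometric_of_lt_one hq0.le hq1).mul_right (q ^ ((1 : ℝ) / 2))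
    refine this.congr fun k => ?_
    rw [Real.rpow_add hq0, Real.rpow_natCast]
  have hmul3 : Multipliable fun k : ℕ => (1 + q ^ ((k : ℝ) + 1 / 2)) ^ 2 := by
    simpa [pow_two] using hmul2.mul hmul2
  have h4 := hmul3.tendsto_prod_tprod_nat
  simp only [hF] at hT
  rw [tendsto_nhds_unique h4 hT, tsum_mul_left]
  ring
end
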